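/- For every fixed real c with 1 < c < 11/6, the set {n ∈ ℕ : ⌊m^c⌋ = n for some m ∈ ℕ, and n is cube-free} is infinite; equivalently, there are infinitely many m ∈ ℕ such that ⌊m^c⌋ is cube-free. -/

import Mathlib

/-- A natural number is cube-free if no prime cube divides it. -/
def CubeFree (n : ℕ) : Prop := ∀ p : ℕ, p.Prime → ¬ p ^ 3 ∣ n

/-!
Sieve by all cubes `d ^ 3` with `d ≥ 2`; it suffices that the `m < N` with `d ^ 3 ∣ ⌊m ^ c⌋` for
some `d` have upper density below `1`.

For a fixed modulus `K`, if `K ∣ ⌊x⌋` then the exponential sum `∑ k < K, e(k (x - 1 / 2) / K)` has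
modulus at least `2 K / π`. On average over `x = m ^ c` its square is `K`, because the sequences
`e(b m ^ c)`, `b ≠ 0`, have mean value zero: by van der Corput's difference trick this reduces to
the phases `b ((m + a) ^ c - m ^ c)`, whose increments are of exact order `m ^ (c - 2)`: this tends
to `0`, but slowly enough for a Fejér-type summation by parts. So `K` divides `⌊m ^ c⌋` for a
proportion at most `π ^ 2 / (4 K)` of the `m`, and `∑ d ≥ 2, d ^ (-3) ≤ 1 / 4` gives the total
`π ^ 2 / 16 < 1`.

To sum over `d` one needs a bound uniform in `K`. If `K` divides both `⌊m ^ c⌋` and `⌊(m + a) ^ c⌋`,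
then `(m + a) ^ c - m ^ c` is within `1` of a positive multiple of `K`, and convexity limits how
often this happens. Taking all `a` up to `K ^ ((4 - c) / 6)` into account yields
`O(K ^ (-(4 - c) / 6) N)` solutions, and with `K = d ^ 3` the exponent `(4 - c) / 2` exceeds `1`
exactly when `c < 2`.
-/

section

open Filter Topology Asymptotics Finset
open scoped Real RealInnerProductSpace

section MeanZero

variable {E F ι : Type*} [NormedAddCommGroup E] [NormedAddCommGroup F]

/-- The sequence `z` has asymptotic mean value zero: its Cesàro means `(∑ m < N, z m) / N` tend
to `0`. -/
def MeanZero (z : ℕ → E) : Prop :=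
  (fun N : ℕ => ∑ m ∈ range N, z m) =o[atTop] (fun N : ℕ => (N : ℝ))

lemma meanZero_iff_eventually_norm_sum_le {z : ℕ → E} :
    MeanZero z ↔ ∀ ε : ℝ, 0 < ε → ∀ᶠ N : ℕ in atTop, ‖∑ m ∈ range N, z m‖ ≤ ε * N := by
  simp only [MeanZero, isLittleO_iff, Real.norm_natCast]

lemma meanZero_of_tendsto_zero [NormedSpace ℝ E] {z : ℕ → E} (hz : Tendsto z atTop (𝓝 0)) :
    MeanZero z :=
  isLittleO_sum_range_of_tendsto_zero hz

lemma MeanZero.sub {y z : ℕ → E} (hy : MeanZero y) (hz : MeanZero z) :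
    MeanZero (fun m => y m - z m) := by
  simpa only [MeanZero, sum_sub_distrib] using IsLittleO.sub hy hz

lemma MeanZero.add {y z : ℕ → E} (hy : MeanZero y) (hz : MeanZero z) :
    MeanZero (fun m => y m + z m) := by
  simpa only [MeanZero, sum_add_distrib] using IsLittleO.add hy hz

lemma MeanZero.sum {s : Finset ι} {z : ι → ℕ → E} (hz : ∀ k ∈ s, MeanZero (z k)) :
    MeanZero (fun m => ∑ k ∈ s, z k m) := by
  simpa only [MeanZero, sum_comm (s := s)] using IsLittleO.fun_sum hz

lemma MeanZero.map [NormedSpace ℝ E] [NormedSpace ℝ F] {z : ℕ → E} (hz : MeanZero z)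
    (L : E →L[ℝ] F) : MeanZero (fun m => L (z m)) := by
  simpa only [MeanZero, ← map_sum] using (L.isBigO_comp _ _).trans_isLittleO hz

lemma MeanZero.of_norm_le {z : ℕ → E} {u : ℕ → ℝ} (hu : MeanZero u) (hz : ∀ m, ‖z m‖ ≤ u m) :
    MeanZero z :=
  (IsBigO.of_bound' (.of_forall fun _ =>
    (norm_sum_le_of_le _ fun m _ => hz m).trans (Real.le_norm_self _))).trans_isLittleO hu

lemma isLittleO_natCast_of_norm_le {z : ℕ → E} {B : ℝ} (hz : ∀ m, ‖z m‖ ≤ B) :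
    z =o[atTop] (fun m : ℕ => (m : ℝ)) :=
  (IsBigO.of_bound' (.of_forall fun m => (hz m).trans (Real.le_norm_self B))).trans_isLittleO
    (isLittleO_const_left.2 (.inr (tendsto_norm_atTop_atTop.comp tendsto_natCast_atTop_atTop)))

lemma meanZero_sub_succ {v : ℕ → E} (hv : v =o[atTop] (fun m : ℕ => (m : ℝ))) :
    MeanZero (fun m => v (m + 1) - v m) := by
  simpa only [MeanZero, sum_range_sub] using
    hv.sub (isLittleO_natCast_of_norm_le fun _ => le_refl ‖v 0‖)

lemma meanZero_smul_sub_succ [NormedSpace ℝ E] {w : ℕ → ℝ} {z : ℕ → E} {B : ℝ}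
    (hw : Monotone w) (hwo : w =o[atTop] (fun m : ℕ => (m : ℝ))) (hz : ∀ m, ‖z m‖ ≤ B) :
    MeanZero (fun m => w m • (z (m + 1) - z m)) := by
  have hwz : (fun m => w m • z m) =o[atTop] (fun m : ℕ => (m : ℝ)) := by
    refine (IsBigO.of_bound B (.of_forall fun m => ?_)).trans_isLittleO hwo
    rw [norm_smul, mul_comm]
    gcongr
    exact hz m
  have hvariation : MeanZero (fun m => (w (m + 1) - w m) • z (m + 1)) := by
    refine (meanZero_sub_succ (hwo.const_mul_left B)).of_norm_le fun m => ?_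
    rw [← mul_sub, norm_smul, Real.norm_of_nonneg (sub_nonneg.2 (hw m.le_succ)), mul_comm]
    gcongr
    · exact sub_nonneg.2 (hw m.le_succ)
    · exact hz (m + 1)
  convert (meanZero_sub_succ hwz).sub hvariation using 2 with m
  module

lemma meanZero_sub_shift [NormedSpace ℝ E] {z : ℕ → E} {B : ℝ} (hz : ∀ m, ‖z m‖ ≤ B) (k : ℕ) :
    MeanZero (fun m => z (m + k) - z m) := by
  convert MeanZero.sum (s := range k) fun j _ => meanZero_sub_succ
    (isLittleO_natCast_of_norm_le fun m => hz (m + j)) using 2 with m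
  simp only [add_right_comm m 1, add_assoc m _ 1]
  exact (sum_range_sub (fun j => z (m + j)) k).symm

lemma MeanZero.shift [NormedSpace ℝ E] {z : ℕ → E} {B : ℝ} (h : MeanZero z)
    (hz : ∀ m, ‖z m‖ ≤ B) (k : ℕ) : MeanZero (fun m => z (m + k)) := by
  simpa using h.add (meanZero_sub_shift hz k)

lemma norm_sum_range_sq_le (z : ℕ → E) (N : ℕ) :
    ‖∑ m ∈ range N, z m‖ ^ 2 ≤ N * ∑ m ∈ range N, ‖z m‖ ^ 2 := by
  calc ‖∑ m ∈ range N, z m‖ ^ 2 ≤ (∑ m ∈ range N, ‖z m‖) ^ 2 := by gcongr; exact norm_sum_le _ _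
    _ ≤ N * ∑ m ∈ range N, ‖z m‖ ^ 2 := by
      simpa using sq_sum_le_card_mul_sum_sq (s := range N) (f := fun m => ‖z m‖)

end MeanZero

section InnerProductSpace

variable {E ι : Type*} [NormedAddCommGroup E] [InnerProductSpace ℝ E]

lemma meanZero_norm_sum_sq_sub (s : Finset ι) {y : ι → ℕ → E}
    (hy : ∀ k ∈ s, ∀ l ∈ s, k ≠ l → MeanZero (fun m => ⟪y k m, y l m⟫)) :
    MeanZero (fun m => ‖∑ k ∈ s, y k m‖ ^ 2 - ∑ k ∈ s, ‖y k m‖ ^ 2) := by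
  classical
  convert MeanZero.sum (s := s) fun k hk => MeanZero.sum (s := s.erase k) fun l hl =>
    hy k hk l (mem_of_mem_erase hl) (ne_of_mem_erase hl).symm using 2 with m
  rw [← real_inner_self_eq_norm_sq, sum_inner, ← sum_sub_distrib]
  refine sum_congr rfl fun k hk => ?_
  rw [inner_sum, ← add_sum_erase s _ hk, real_inner_self_eq_norm_sq, add_sub_cancel_left]

lemma meanZero_inner_shift {z : ℕ → E} {B : ℝ} (hz : ∀ m, ‖z m‖ ≤ B)
    (hcorr : ∀ a, 1 ≤ a → MeanZero (fun m => ⟪z (m + a), z m⟫)) {k l : ℕ} (hkl : k ≠ l) :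
    MeanZero (fun m => ⟪z (m + k), z (m + l)⟫) := by
  wlog hlt : l < k generalizing k l
  · simpa only [real_inner_comm] using this hkl.symm (by omega)
  have hbounded (m : ℕ) : ‖⟪z (m + (k - l)), z m⟫‖ ≤ B * B :=
    (norm_inner_le_norm _ _).trans (mul_le_mul (hz _) (hz _) (norm_nonneg _)
      ((norm_nonneg _).trans (hz 0)))
  convert (hcorr (k - l) (by omega)).shift hbounded l using 4 with m
  omega

lemma eventually_norm_sum_window_le {z : ℕ → E} {B : ℝ} (hz : ∀ m, ‖z m‖ ≤ B)
    (hcorr : ∀ a, 1 ≤ a → MeanZero (fun m => ⟪z (m + a), z m⟫)) {n : ℕ} (hn : 1 ≤ n) :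
    ∀ᶠ N : ℕ in atTop,
      ‖∑ m ∈ range N, ∑ k ∈ range (n ^ 2), z (m + k)‖ ≤ n * (B + 1) * N := by
  have hB : 0 ≤ B := (norm_nonneg _).trans (hz 0)
  have hpyth := meanZero_norm_sum_sq_sub (range (n ^ 2)) (y := fun k m => z (m + k))
    fun k _ l _ hkl => meanZero_inner_shift hz hcorr hkl
  filter_upwards [meanZero_iff_eventually_norm_sum_le.1 hpyth 1 one_pos] with N hN
  have hdiag : ∑ m ∈ range N, ∑ k ∈ range (n ^ 2), ‖z (m + k)‖ ^ 2 ≤ N * (n ^ 2 * B ^ 2) := by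
    have hterm (m k : ℕ) : ‖z (m + k)‖ ^ 2 ≤ B ^ 2 := by gcongr; exact hz _
    refine (sum_le_card_nsmul (range N) _ _ fun m _ =>
      sum_le_card_nsmul (range (n ^ 2)) _ _ fun k _ => hterm m k).trans_eq ?_
    simp only [card_range, nsmul_eq_mul, Nat.cast_pow]
  have hsquares : ∑ m ∈ range N, ‖∑ k ∈ range (n ^ 2), z (m + k)‖ ^ 2
      ≤ n ^ 2 * (B + 1) ^ 2 * N := by
    rw [sum_sub_distrib] at hN
    have hn' : (1 : ℝ) ≤ n ^ 2 := one_le_pow₀ (by exact_mod_cast hn)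
    have hN' : (N : ℝ) ≤ n ^ 2 * N := le_mul_of_one_le_left N.cast_nonneg hn'
    have := (Real.le_norm_self _).trans hN
    have : 0 ≤ (n : ℝ) ^ 2 * N * (2 * B) := by positivity
    linarith
  refine le_of_sq_le_sq ((norm_sum_range_sq_le _ N).trans ?_) (by positivity)
  calc (N : ℝ) * _ ≤ N * (n ^ 2 * (B + 1) ^ 2 * N) := by gcongr
    _ = (n * (B + 1) * N) ^ 2 := by ring

theorem meanZero_of_meanZero_inner_shift {z : ℕ → E} {B : ℝ} (hz : ∀ m, ‖z m‖ ≤ B)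
    (hcorr : ∀ a, 1 ≤ a → MeanZero (fun m => ⟪z (m + a), z m⟫)) : MeanZero z := by
  rw [meanZero_iff_eventually_norm_sum_le]
  intro ε hε
  have hB : 0 ≤ B := (norm_nonneg _).trans (hz 0)
  obtain ⟨n, hn⟩ := exists_nat_gt ((B + 2) / ε)
  have hn0 : (0 : ℝ) < n := lt_of_le_of_lt (by positivity) hn
  have hn1 : (1 : ℝ) ≤ n := by exact_mod_cast hn0
  have hshift := MeanZero.sum (s := range (n ^ 2)) fun k _ => meanZero_sub_shift hz k
  filter_upwards [eventually_norm_sum_window_le hz hcorr (by exact_mod_cast hn1),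
    meanZero_iff_eventually_norm_sum_le.1 hshift 1 one_pos] with N hwindow hdiff
  have hsplit : ((n : ℝ) ^ 2) • ∑ m ∈ range N, z m
      = ∑ m ∈ range N, ∑ k ∈ range (n ^ 2), z (m + k)
        - ∑ m ∈ range N, ∑ k ∈ range (n ^ 2), (z (m + k) - z m) := by
    rw [← sum_sub_distrib, smul_sum]
    refine sum_congr rfl fun m _ => ?_
    rw [← sum_sub_distrib]
    simp only [sub_sub_cancel, sum_const, card_range, ← Nat.cast_smul_eq_nsmul ℝ, Nat.cast_pow]
  refine le_of_mul_le_mul_left (a := (n : ℝ) ^ 2) ?_ (by positivity)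
  calc (n : ℝ) ^ 2 * ‖∑ m ∈ range N, z m‖ = ‖((n : ℝ) ^ 2) • ∑ m ∈ range N, z m‖ := by
        rw [norm_smul, Real.norm_of_nonneg (by positivity)]
    _ ≤ n * (B + 1) * N + 1 * N := by
        rw [hsplit]; exact (norm_sub_le _ _).trans (add_le_add hwindow hdiff)
    _ ≤ n * (B + 1) * N + n * N := by gcongr
    _ = n * (B + 2) * N := by ring
    _ ≤ n * (n * ε) * N := by gcongr; exact ((div_lt_iff₀ hε).1 hn).le
    _ = (n : ℝ) ^ 2 * (ε * N) := by ring

end InnerProductSpace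

section ExponentialSums

open Complex (I)

theorem meanZero_exp_of_tendsto_mul_sub {θ w : ℕ → ℝ} {κ : ℝ} (hκ : κ ≠ 0) (hw : Monotone w)
    (hwo : w =o[atTop] (fun m : ℕ => (m : ℝ)))
    (hθ : Tendsto (fun m => θ (m + 1) - θ m) atTop (𝓝 0))
    (hwθ : Tendsto (fun m => w m * (θ (m + 1) - θ m)) atTop (𝓝 κ)) :
    MeanZero (fun m => Complex.exp (I * θ m)) := by
  set Δ : ℕ → ℝ := fun m => θ (m + 1) - θ m with hΔ
  set e : ℕ → ℂ := fun m => Complex.exp (I * θ m)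
  have he (m : ℕ) : ‖e m‖ = 1 := Complex.norm_exp_I_mul_ofReal _
  have hlinear :
      Tendsto (fun m => (w m : ℂ) * (Complex.exp (I * Δ m) - 1 - I * Δ m)) atTop (𝓝 0) := by
    have hquad : Tendsto (fun m => ‖w m * Δ m‖ * ‖Δ m‖) atTop (𝓝 0) := by
      simpa using hwθ.norm.mul hθ.norm
    refine squeeze_zero_norm' ?_ hquad
    filter_upwards [hθ.norm.eventually (ge_mem_nhds (by simp : ‖(0 : ℝ)‖ < 1))] with m hm
    have hIΔ : ‖I * (Δ m : ℂ)‖ = ‖Δ m‖ := by simp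
    rw [norm_mul, norm_mul, Complex.norm_real, mul_assoc, ← sq, ← hIΔ]
    gcongr
    exact Complex.norm_exp_sub_one_sub_id_le (hIΔ.trans_le hm)
  have hdiff : Tendsto (fun m => w m • (e (m + 1) - e m) - I * κ * e m) atTop (𝓝 0) := by
    have hfactor (m : ℕ) : w m • (e (m + 1) - e m) - I * κ * e m
        = e m * (w m * (Complex.exp (I * Δ m) - 1 - I * Δ m) + I * ((w m * Δ m : ℝ) - κ)) := by
      have hsucc : e (m + 1) = e m * Complex.exp (I * Δ m) := by
        simp only [e, hΔ, ← Complex.exp_add]; congr 1; push_cast; ring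
      rw [hsucc, Complex.real_smul]; push_cast; ring
    have hκ' : Tendsto (fun m => ((w m * Δ m : ℝ) : ℂ) - κ) atTop (𝓝 0) :=
      tendsto_sub_nhds_zero_iff.2 hwθ.ofReal
    simp only [hfactor, tendsto_zero_iff_norm_tendsto_zero (f := fun m => e m * _), norm_mul, he,
      one_mul]
    simpa using (hlinear.add (hκ'.const_mul I)).norm
  have hmean : MeanZero (fun m => I * κ * e m) := by
    simpa using (meanZero_smul_sub_succ hw hwo fun m => (he m).le).sub
      (meanZero_of_tendsto_zero hdiff)
  convert hmean.map (.mul ℝ ℂ (I * κ)⁻¹) using 2 with m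
  rw [ContinuousLinearMap.mul_apply', inv_mul_cancel_left₀ (by simpa using hκ)]

lemma exists_second_difference_eq {f f' f'' : ℝ → ℝ} {x s t : ℝ} (hs : 0 < s) (ht : 0 < t)
    (hf : ∀ y ∈ Set.Icc x (x + s + t), HasDerivAt f (f' y) y)
    (hf' : ∀ y ∈ Set.Icc x (x + s + t), HasDerivAt f' (f'' y) y) :
    ∃ ζ ∈ Set.Ioo x (x + s + t),
      (f (x + t + s) - f (x + t)) - (f (x + s) - f x) = s * t * f'' ζ := by
  have hdiff (y : ℝ) (hy : y ∈ Set.Icc x (x + t)) :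
      HasDerivAt (fun y => f (y + s) - f y) (f' (y + s) - f' y) y :=
    ((hf _ ⟨by linarith [hy.1], by linarith [hy.2]⟩).comp_add_const y s).sub
      (hf _ ⟨hy.1, by linarith [hy.2]⟩)
  obtain ⟨ξ, hξ, hfirst⟩ := exists_hasDerivAt_eq_slope _ _ (lt_add_of_pos_right x ht)
    (fun y hy => (hdiff y hy).continuousAt.continuousWithinAt)
    (fun y hy => hdiff y (Set.Ioo_subset_Icc_self hy))
  have hsub {y : ℝ} (hy : y ∈ Set.Icc ξ (ξ + s)) : y ∈ Set.Icc x (x + s + t) :=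
    ⟨by linarith [hy.1, hξ.1], by linarith [hy.2, hξ.2]⟩
  obtain ⟨ζ, hζ, hsecond⟩ := exists_hasDerivAt_eq_slope f' f'' (lt_add_of_pos_right ξ hs)
    (fun y hy => (hf' y (hsub hy)).continuousAt.continuousWithinAt)
    (fun y hy => hf' y (hsub (Set.Ioo_subset_Icc_self hy)))
  refine ⟨ζ, ⟨hξ.1.trans hζ.1, by linarith [hζ.2, hξ.2]⟩, ?_⟩
  rw [add_sub_cancel_left, eq_div_iff (by positivity)] at hfirst hsecond
  rw [← hfirst, ← hsecond]
  ring

lemma exists_rpow_second_difference_eq (c : ℝ) {x s t : ℝ} (hx : 0 < x) (hs : 0 < s)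
    (ht : 0 < t) :
    ∃ ζ ∈ Set.Ioo x (x + s + t),
      ((x + t + s) ^ c - (x + t) ^ c) - ((x + s) ^ c - x ^ c)
        = s * t * (c * (c - 1) * ζ ^ (c - 2)) := by
  refine exists_second_difference_eq (f := (· ^ c)) (f' := fun y => c * y ^ (c - 1))
    (f'' := fun y => c * (c - 1) * y ^ (c - 2)) hs ht
    (fun y hy => Real.hasDerivAt_rpow_const (.inl (hx.trans_le hy.1).ne')) fun y hy =>
      ((Real.hasDerivAt_rpow_const (.inl (hx.trans_le hy.1).ne')).const_mul c).congr_deriv ?_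
  rw [mul_assoc, show c - 1 - 1 = c - 2 by ring]

lemma tendsto_rpow_mul_second_difference (c : ℝ) {a : ℝ} (ha : 0 < a) :
    Tendsto (fun m : ℕ => (m : ℝ) ^ (2 - c) *
      (((m + 1 + a) ^ c - (m + 1 : ℝ) ^ c) - ((m + a) ^ c - (m : ℝ) ^ c)))
      atTop (𝓝 (a * (c * (c - 1)))) := by
  have hζ (m : ℕ) : ∃ r : ℝ, 1 ≤ r ∧ r ≤ 1 + (a + 1) / m ∧ (0 < m → (m : ℝ) ^ (2 - c) *
      (((m + 1 + a) ^ c - (m + 1 : ℝ) ^ c) - ((m + a) ^ c - (m : ℝ) ^ c))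
        = a * (c * (c - 1)) * r ^ (c - 2)) := by
    rcases m.eq_zero_or_pos with rfl | hm
    · exact ⟨1, le_rfl, by simp, fun h => absurd h (lt_irrefl 0)⟩
    have hm' : (0 : ℝ) < m := by exact_mod_cast hm
    obtain ⟨ζ, ⟨hζl, hζu⟩, heq⟩ := exists_rpow_second_difference_eq c hm' ha one_pos
    refine ⟨ζ / m, (one_le_div hm').2 hζl.le, ?_, fun _ => ?_⟩
    · rw [div_le_iff₀ hm', add_mul, div_mul_cancel₀ _ hm'.ne']
      linarith
    · rw [heq, Real.div_rpow (hm'.trans hζl).le hm'.le, ← neg_sub c 2, Real.rpow_neg hm'.le]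
      field_simp
  choose r hr1 hr2 hr using hζ
  have hr_lim : Tendsto r atTop (𝓝 1) := by
    refine tendsto_of_tendsto_of_tendsto_of_le_of_le tendsto_const_nhds ?_ hr1 hr2
    simpa using (tendsto_const_div_atTop_nhds_zero_nat (a + 1)).const_add 1
  have hpow := (hr_lim.rpow_const (p := c - 2) (.inl one_ne_zero)).const_mul (a * (c * (c - 1)))
  rw [Real.one_rpow, mul_one] at hpow
  refine hpow.congr' ?_
  filter_upwards [eventually_gt_atTop 0] with m hm using (hr m hm).symm

lemma isLittleO_natCast_rpow {r : ℝ} (hr : r < 1) :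
    (fun m : ℕ => (m : ℝ) ^ r) =o[atTop] (fun m : ℕ => (m : ℝ)) := by
  refine isLittleO_of_tendsto' ?_ (((tendsto_rpow_neg_atTop (sub_pos.2 hr)).comp
    tendsto_natCast_atTop_atTop).congr' ?_)
  all_goals filter_upwards [eventually_gt_atTop 0] with m hm
  · exact fun h => absurd h (by positivity)
  · have hm' : (0 : ℝ) < m := by exact_mod_cast hm
    simp only [Function.comp_apply, neg_sub, Real.rpow_sub_one hm'.ne']

lemma meanZero_exp_rpow_difference {b c a : ℝ} (hc1 : 1 < c) (hc2 : c < 2) (hb : b ≠ 0)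
    (ha : 0 < a) :
    MeanZero (fun m : ℕ => Complex.exp (I * (b * ((m + a) ^ c - (m : ℝ) ^ c) : ℝ))) := by
  have hweight : Tendsto (fun m : ℕ => (m : ℝ) ^ (2 - c)) atTop atTop :=
    (tendsto_rpow_atTop (by linarith)).comp tendsto_natCast_atTop_atTop
  have hlim : Tendsto (fun m : ℕ => (m : ℝ) ^ (2 - c) *
      (b * (((m + 1 : ℕ) + a) ^ c - ((m + 1 : ℕ) : ℝ) ^ c) - b * ((m + a) ^ c - (m : ℝ) ^ c)))
      atTop (𝓝 (b * (a * (c * (c - 1))))) := by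
    refine ((tendsto_rpow_mul_second_difference c ha).const_mul b).congr fun m => ?_
    push_cast
    ring
  refine meanZero_exp_of_tendsto_mul_sub (w := fun m => (m : ℝ) ^ (2 - c))
    (θ := fun m => b * ((m + a) ^ c - (m : ℝ) ^ c)) ?_ ?_ ?_ ?_ hlim
  · have : c - 1 ≠ 0 := by linarith
    positivity
  · intro m n hmn
    exact Real.rpow_le_rpow m.cast_nonneg (by exact_mod_cast hmn) (by linarith)
  · exact isLittleO_natCast_rpow (by linarith)
  · refine (hlim.div_atTop hweight).congr' ?_
    filter_upwards [hweight.eventually_ne_atTop 0] with m hm using mul_div_cancel_left₀ _ hm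

lemma inner_exp_I_mul (x y : ℝ) :
    ⟪Complex.exp (I * x), Complex.exp (I * y)⟫ = (Complex.exp (I * (y - x : ℝ))).re := by
  rw [Complex.inner, ← Complex.exp_conj, ← Complex.exp_add]
  congr 2
  simp only [map_mul, Complex.conj_I, Complex.conj_ofReal]
  push_cast
  ring

theorem meanZero_exp_rpow {b c : ℝ} (hc1 : 1 < c) (hc2 : c < 2) (hb : b ≠ 0) :
    MeanZero (fun m : ℕ => Complex.exp (I * (b * (m : ℝ) ^ c : ℝ))) := by
  refine meanZero_of_meanZero_inner_shift (fun m => (Complex.norm_exp_I_mul_ofReal _).le)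
    fun a ha => ?_
  have ha' : (0 : ℝ) < a := by exact_mod_cast ha
  simp only [real_inner_comm, inner_exp_I_mul, ← mul_sub, Nat.cast_add]
  exact (meanZero_exp_rpow_difference hc1 hc2 hb ha').map Complex.reCLM

lemma two_div_pi_mul_le_norm_sum_exp {K : ℕ} {θ : ℝ} (hθ : K * |θ| ≤ π) :
    2 / π * K ≤ ‖∑ k ∈ range K, Complex.exp (I * (k * θ : ℝ))‖ := by
  rcases eq_or_ne θ 0 with rfl | hθ0
  · simpa using mul_le_of_le_one_left K.cast_nonneg
      ((div_le_one Real.pi_pos).2 Real.two_le_pi)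
  have hgeom : (∑ k ∈ range K, Complex.exp (I * (k * θ : ℝ))) * (Complex.exp (I * θ) - 1)
      = Complex.exp (I * (K * θ : ℝ)) - 1 := by
    have hpow (k : ℕ) : Complex.exp (I * (k * θ : ℝ)) = Complex.exp (I * θ) ^ k := by
      rw [← Complex.exp_nat_mul]; congr 1; push_cast; ring
    simp only [hpow, geom_sum_mul]
  have hsin : 2 / π * |K * θ / 2| ≤ |Real.sin (K * θ / 2)| := by
    refine Real.mul_abs_le_abs_sin ?_
    rw [abs_div, abs_mul, Nat.abs_cast, Nat.abs_ofNat]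
    linarith
  refine le_of_mul_le_mul_right ?_ (abs_pos.2 hθ0)
  calc 2 / π * K * |θ| = 2 * (2 / π * |K * θ / 2|) := by
        rw [abs_div, abs_mul, Nat.abs_cast, Nat.abs_ofNat]; ring
    _ ≤ 2 * |Real.sin (K * θ / 2)| := by gcongr
    _ = ‖Complex.exp (I * (K * θ : ℝ)) - 1‖ := by
        rw [Complex.norm_exp_I_mul_ofReal_sub_one, norm_mul, Real.norm_eq_abs, Real.norm_eq_abs,
          Nat.abs_ofNat]
    _ = ‖∑ k ∈ range K, Complex.exp (I * (k * θ : ℝ))‖ * ‖Complex.exp (I * θ) - 1‖ := by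
        rw [← hgeom, norm_mul]
    _ ≤ ‖∑ k ∈ range K, Complex.exp (I * (k * θ : ℝ))‖ * |θ| := by
        gcongr; exact Real.norm_exp_I_mul_ofReal_sub_one_le

-- Modulo `2 π` the phase is `2 π / K` times `fract x - 1 / 2`, so it is at most `π / K` in modulus.
lemma two_div_pi_mul_le_norm_sum_exp_of_dvd_floor {x : ℝ} (hx : 0 ≤ x) {K : ℕ} (hK : 0 < K)
    (hdvd : K ∣ ⌊x⌋₊) :
    2 / π * K ≤ ‖∑ k ∈ range K, Complex.exp (I * (k * (2 * π / K * (x - 1 / 2)) : ℝ))‖ := by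
  obtain ⟨q, hq⟩ := hdvd
  have : (0 : ℝ) < K := by exact_mod_cast hK
  have hKC : (K : ℂ) ≠ 0 := by exact_mod_cast hK.ne'
  have hfloor : (⌊x⌋₊ : ℝ) = K * q := by exact_mod_cast hq
  have hfract : |x - K * q - 1 / 2| ≤ 1 / 2 := by
    rw [abs_le]
    constructor <;> linarith [Nat.floor_le hx, Nat.lt_floor_add_one x]
  have hperiod (k : ℕ) : Complex.exp (I * (k * (2 * π / K * (x - 1 / 2)) : ℝ))
      = Complex.exp (I * (k * (2 * π / K * (x - K * q - 1 / 2)) : ℝ)) := by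
    rw [← mul_one (Complex.exp (I * (k * (2 * π / K * (x - K * q - 1 / 2)) : ℝ))),
      ← Complex.exp_nat_mul_two_pi_mul_I (k * q), ← Complex.exp_add]
    congr 1
    push_cast
    field_simp
    ring
  simp only [hperiod]
  refine two_div_pi_mul_le_norm_sum_exp ?_
  calc K * |2 * π / K * (x - K * q - 1 / 2)| = 2 * π * |x - K * q - 1 / 2| := by
        rw [abs_mul, abs_of_pos (by positivity)]; field_simp
    _ ≤ 2 * π * (1 / 2) := by gcongr
    _ = π := by ring

theorem eventually_card_dvd_floor_le {x : ℕ → ℝ} (hx : ∀ m, 0 ≤ x m) {K : ℕ} (hK : 0 < K)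
    (hmean : ∀ j : ℤ, j ≠ 0 →
      MeanZero (fun m => Complex.exp (I * (2 * π * j / K * x m : ℝ)))) {ε : ℝ} (hε : 0 < ε) :
    ∀ᶠ N : ℕ in atTop, (#{m ∈ range N | K ∣ ⌊x m⌋₊} : ℝ) ≤ (π ^ 2 / 4 / K + ε) * N := by
  set y : ℕ → ℕ → ℂ := fun k m => Complex.exp (I * (k * (2 * π / K * (x m - 1 / 2)) : ℝ))
  have horth : ∀ k ∈ range K, ∀ l ∈ range K, k ≠ l → MeanZero (fun m => ⟪y k m, y l m⟫) := by
    intro k _ l _ hkl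
    have hphase (m : ℕ) : ⟪y k m, y l m⟫ = (Complex.exp (I * (-(π * (l - k) / K) : ℝ)) *
        Complex.exp (I * (2 * π * ((l - k : ℤ) : ℝ) / K * x m : ℝ))).re := by
      rw [inner_exp_I_mul, ← Complex.exp_add]
      congr 2
      push_cast
      ring
    simp only [hphase]
    exact (hmean (l - k) (sub_ne_zero.2 (by exact_mod_cast hkl.symm))).map
      (Complex.reCLM.comp (.mul ℝ ℂ (Complex.exp (I * (-(π * (l - k) / K) : ℝ)))))
  have : (0 : ℝ) < K := by exact_mod_cast hK
  filter_upwards [meanZero_iff_eventually_norm_sum_le.1 (meanZero_norm_sum_sq_sub (range K) horth)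
    ((2 / π * K) ^ 2 * ε) (by positivity)] with N hN
  have hupper : ∑ m ∈ range N, ‖∑ k ∈ range K, y k m‖ ^ 2 ≤ K * N + (2 / π * K) ^ 2 * ε * N := by
    have hunit (k m : ℕ) : ‖y k m‖ = 1 := Complex.norm_exp_I_mul_ofReal _
    simp only [hunit, one_pow, sum_const, card_range, nsmul_eq_mul, mul_one, sum_sub_distrib] at hN
    linarith [(Real.le_norm_self _).trans hN]
  have hlower : #{m ∈ range N | K ∣ ⌊x m⌋₊} * (2 / π * K) ^ 2
      ≤ ∑ m ∈ range N, ‖∑ k ∈ range K, y k m‖ ^ 2 := by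
    rw [← nsmul_eq_mul]
    refine (card_nsmul_le_sum _ _ _ fun m hm => ?_).trans
      (sum_le_sum_of_subset_of_nonneg (filter_subset _ _) fun _ _ _ => sq_nonneg _)
    gcongr
    exact two_div_pi_mul_le_norm_sum_exp_of_dvd_floor (hx m) hK (mem_filter.1 hm).2
  refine le_of_mul_le_mul_right (hlower.trans (hupper.trans_eq ?_))
    (by positivity : 0 < (2 / π * K) ^ 2)
  field_simp
  ring

end ExponentialSums

/-- The `m` with `1 ≤ m < N` for which `K` divides `⌊m ^ c⌋`. The index `m = 0` is left out because
`⌊0 ^ c⌋ = 0` is divisible by every `K`. -/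
noncomputable def floorPowMultiples (c : ℝ) (K N : ℕ) : Finset ℕ :=
  {m ∈ Ico 1 N | K ∣ ⌊((m : ℕ) : ℝ) ^ c⌋₊}

lemma eventually_card_floorPowMultiples_le {c : ℝ} (hc1 : 1 < c) (hc2 : c < 2) {K : ℕ}
    (hK : 0 < K) {ε : ℝ} (hε : 0 < ε) :
    ∀ᶠ N : ℕ in atTop, (#(floorPowMultiples c K N) : ℝ) ≤ (π ^ 2 / 4 / K + ε) * N := by
  filter_upwards [eventually_card_dvd_floor_le (x := fun m => (m : ℝ) ^ c)
    (fun m => Real.rpow_nonneg m.cast_nonneg c) hK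
    (fun _ _ => meanZero_exp_rpow hc1 hc2 (by positivity)) hε] with N hN
  refine le_trans ?_ hN
  gcongr
  exact filter_subset_filter _ fun m hm => mem_range.2 (mem_Ico.1 hm).2

section LargeModuli

lemma card_le_of_forall_sub_le {S : Finset ℕ} {D : ℝ} (hD : 0 ≤ D)
    (h : ∀ m ∈ S, ∀ n ∈ S, (n : ℝ) - m ≤ D) : (#S : ℝ) ≤ D + 1 := by
  rcases S.eq_empty_or_nonempty with rfl | hS
  · simp only [card_empty, Nat.cast_zero]
    positivity
  have hsub : S ⊆ Icc (S.min' hS) (S.min' hS + ⌊D⌋₊) := fun n hn => by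
    refine mem_Icc.2 ⟨S.min'_le n hn, Nat.le_add_of_sub_le (Nat.le_floor ?_) |>.trans_eq
      (add_comm _ _)⟩
    rw [Nat.cast_sub (S.min'_le n hn)]
    exact h _ (S.min'_mem hS) n hn
  have hcard : #S ≤ ⌊D⌋₊ + 1 := by
    simpa only [Nat.card_Icc, add_assoc, add_tsub_cancel_left] using card_le_card hsub
  calc (#S : ℝ) ≤ ⌊D⌋₊ + 1 := by exact_mod_cast hcard
    _ ≤ D + 1 := by gcongr; exact Nat.floor_le hD

-- `F` takes at most `G / K` values on `S`, and along each of its fibres `g` varies by at most `2`.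
lemma card_le_of_near_multiples {S : Finset ℕ} {g : ℕ → ℝ} {F : ℕ → ℕ} {K : ℕ} {r G : ℝ}
    (hK : 0 < K) (hr : 0 < r) (hG : 0 ≤ G) (hF : ∀ m ∈ S, 1 ≤ F m)
    (hnear : ∀ m ∈ S, |F m * K - g m| ≤ 1) (hgG : ∀ m ∈ S, g m + 1 ≤ G)
    (hgrowth : ∀ m ∈ S, ∀ n ∈ S, m < n → r * (n - m) ≤ g n - g m) :
    (#S : ℝ) ≤ (2 / r + 1) * (G / K) := by
  have hK' : (0 : ℝ) < K := by exact_mod_cast hK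
  have hvalues : ∀ m ∈ S, F m ∈ Icc 1 ⌊G / K⌋₊ := fun m hm => by
    refine mem_Icc.2 ⟨hF m hm, Nat.le_floor ((le_div_iff₀ hK').2 ?_)⟩
    linarith [(abs_le.1 (hnear m hm)).2, hgG m hm]
  have hfiber (q : ℕ) : (#{m ∈ S | F m = q} : ℝ) ≤ 2 / r + 1 := by
    refine card_le_of_forall_sub_le (by positivity) fun m hm n hn => ?_
    obtain ⟨hmS, rfl⟩ := mem_filter.1 hm
    obtain ⟨hnS, hnm⟩ := mem_filter.1 hn
    rcases le_or_gt n m with h | h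
    · have : (n : ℝ) ≤ m := by exact_mod_cast h
      exact (sub_nonpos.2 this).trans (by positivity)
    rw [le_div_iff₀' hr]
    have hn_near := hnear n hnS
    rw [hnm] at hn_near
    linarith [hgrowth m hmS n hnS h, (abs_le.1 (hnear m hmS)).2, (abs_le.1 hn_near).1]
  calc (#S : ℝ) = ∑ q ∈ Icc 1 ⌊G / K⌋₊, (#{m ∈ S | F m = q} : ℝ) := by
        exact_mod_cast card_eq_sum_card_fiberwise hvalues
    _ ≤ ⌊G / K⌋₊ * (2 / r + 1) := by
        simpa only [Nat.card_Icc, add_tsub_cancel_right, nsmul_eq_mul] using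
          sum_le_card_nsmul (Icc 1 ⌊G / K⌋₊) _ _ fun q _ => hfiber q
    _ ≤ G / K * (2 / r + 1) := by gcongr; exact Nat.floor_le (by positivity)
    _ = (2 / r + 1) * (G / K) := mul_comm _ _

-- An element of `S` with no other element less than `A` above it is alone in its block
-- `[q A, (q + 1) A)`.
lemma card_le_div_add_sum_card_pairs {S : Finset ℕ} {N A : ℕ} (hS : S ⊆ range N) (hA : 0 < A) :
    #S ≤ N / A + 1 + ∑ a ∈ Ico 1 A, #{m ∈ S | m + a ∈ S} := by
  have hcover : S ⊆ {m ∈ S | ∀ a ∈ Ico 1 A, m + a ∉ S} ∪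
      (Ico 1 A).biUnion fun a => {m ∈ S | m + a ∈ S} := fun m hm => by
    by_cases h : ∀ a ∈ Ico 1 A, m + a ∉ S
    · exact mem_union_left _ (mem_filter.2 ⟨hm, h⟩)
    · push Not at h
      obtain ⟨a, ha, hma⟩ := h
      exact mem_union_right _ (mem_biUnion.2 ⟨a, ha, mem_filter.2 ⟨hm, hma⟩⟩)
  have hisolated : #{m ∈ S | ∀ a ∈ Ico 1 A, m + a ∉ S} ≤ N / A + 1 := by
    rw [← card_range (N / A + 1)]
    refine card_le_card_of_injOn (· / A) (fun m hm => ?_) fun m hm n hn hmn => ?_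
    · exact mem_range.2 (Nat.lt_succ_of_le
        (Nat.div_le_div_right (mem_range.1 (hS (mem_filter.1 hm).1)).le))
    wlog hlt : m < n generalizing m n
    · exact (lt_or_eq_of_le (not_lt.1 hlt)).elim (fun h => (this n hn m hm hmn.symm h).symm) Eq.symm
    have hclose : n - m < A := by
      have hm_eq := Nat.div_add_mod m A
      have hn_eq := Nat.div_add_mod n A
      have hn_mod := Nat.mod_lt n hA
      rw [show m / A = n / A from hmn] at hm_eq
      omega
    refine absurd (mem_filter.1 hn).1 ?_
    simpa only [Nat.add_sub_cancel' hlt.le] using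
      (mem_filter.1 hm).2 (n - m) (mem_Ico.2 ⟨by omega, hclose⟩)
  exact (card_le_card hcover).trans
    ((card_union_le _ _).trans (add_le_add hisolated card_biUnion_le))

lemma rpow_add_one_le {c x a : ℝ} (hc : 1 ≤ c) (hx : 0 ≤ x) (ha : 1 ≤ a) :
    x ^ c + 1 ≤ (x + a) ^ c :=
  (add_le_add_right (Real.one_le_rpow ha (by linarith)) _).trans
    (Real.add_rpow_le_rpow_add hx (by linarith) hc)

lemma rpow_add_sub_rpow_le {c x a : ℝ} (hc : 1 ≤ c) (hx : 0 < x) (ha : 0 < a) :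
    (x + a) ^ c - x ^ c ≤ c * a * (x + a) ^ (c - 1) := by
  have hderiv (y : ℝ) (hy : x ≤ y) : HasDerivAt (· ^ c) (c * y ^ (c - 1)) y :=
    Real.hasDerivAt_rpow_const (.inl (hx.trans_le hy).ne')
  obtain ⟨ξ, hξ, hslope⟩ := exists_hasDerivAt_eq_slope (· ^ c) (fun y => c * y ^ (c - 1))
    (lt_add_of_pos_right x ha) (fun y hy => (hderiv y hy.1).continuousAt.continuousWithinAt)
    fun y hy => hderiv y hy.1.le
  rw [add_sub_cancel_left, eq_div_iff ha.ne'] at hslope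
  rw [← hslope, mul_right_comm]
  gcongr
  · exact (hx.trans hξ.1).le
  · exact hξ.2.le

lemma mul_sub_le_rpow_second_difference {c a x y N : ℝ} (hc1 : 1 ≤ c) (hc2 : c ≤ 2) (ha : 0 < a)
    (hx : 0 < x) (hxy : x < y) (hy : y + a ≤ N) :
    a * (c - 1) * N ^ (c - 2) * (y - x) ≤ ((y + a) ^ c - y ^ c) - ((x + a) ^ c - x ^ c) := by
  have hxy' : 0 < y - x := sub_pos.2 hxy
  have : 0 ≤ c - 1 := sub_nonneg.2 hc1
  obtain ⟨ζ, hζ, heq⟩ := exists_rpow_second_difference_eq c hx ha hxy'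
  have hζ0 : 0 < ζ := hx.trans hζ.1
  rw [add_sub_cancel] at heq
  have hpow : N ^ (c - 2) ≤ ζ ^ (c - 2) :=
    Real.rpow_le_rpow_of_nonpos hζ0 (by linarith [hζ.2]) (sub_nonpos.2 hc2)
  calc a * (c - 1) * N ^ (c - 2) * (y - x) ≤ a * (c - 1) * ζ ^ (c - 2) * (y - x) := by gcongr
    _ = a * (y - x) * (1 * (c - 1) * ζ ^ (c - 2)) := by ring
    _ ≤ a * (y - x) * (c * (c - 1) * ζ ^ (c - 2)) := by gcongr
    _ = _ := heq.symm

lemma abs_floor_sub_floor_sub_le {x y : ℝ} (hx : 0 ≤ x) (hxy : x ≤ y) :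
    |((⌊y⌋₊ - ⌊x⌋₊ : ℕ) : ℝ) - (y - x)| ≤ 1 := by
  rw [Nat.cast_sub (Nat.floor_mono hxy), abs_le]
  constructor <;> linarith [Nat.floor_le hx, Nat.floor_le (hx.trans hxy),
    Nat.lt_floor_add_one x, Nat.lt_floor_add_one y]

lemma mem_floorPowMultiples {c : ℝ} {K N m : ℕ} :
    m ∈ floorPowMultiples c K N ↔ (1 ≤ m ∧ m < N) ∧ K ∣ ⌊(m : ℝ) ^ c⌋₊ := by
  rw [floorPowMultiples, mem_filter, mem_Ico]

lemma card_pairs_floorPowMultiples_le {c : ℝ} (hc1 : 1 < c) (hc2 : c ≤ 2) {K N a : ℕ}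
    (hK : 0 < K) (hN : 0 < N) (ha : 0 < a) :
    (#{m ∈ floorPowMultiples c K N | m + a ∈ floorPowMultiples c K N} : ℝ)
      ≤ 6 / (c - 1) * (N / K) + 3 * a * (N ^ (c - 1) / K) := by
  set S := {m ∈ floorPowMultiples c K N | m + a ∈ floorPowMultiples c K N}
  have hN' : (0 : ℝ) < N := by exact_mod_cast hN
  have ha' : (1 : ℝ) ≤ a := by exact_mod_cast ha
  have hc' : 0 < c - 1 := sub_pos.2 hc1
  have hmem {m : ℕ} (hm : m ∈ S) :
      (0 : ℝ) < m ∧ (m : ℝ) + a ≤ N ∧ K ∣ ⌊((m : ℝ) + a) ^ c⌋₊ - ⌊(m : ℝ) ^ c⌋₊ := by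
    simp only [S, mem_filter, mem_floorPowMultiples, Nat.cast_add] at hm
    exact ⟨by exact_mod_cast hm.1.1.1, by exact_mod_cast hm.2.1.2.le, Nat.dvd_sub hm.2.2 hm.1.2⟩
  have hcount := card_le_of_near_multiples (S := S) (r := a * (c - 1) * N ^ (c - 2))
    (G := 3 * a * N ^ (c - 1)) (g := fun m => ((m : ℝ) + a) ^ c - (m : ℝ) ^ c)
    (F := fun m => (⌊((m : ℝ) + a) ^ c⌋₊ - ⌊(m : ℝ) ^ c⌋₊) / K) hK (by positivity) (by positivity)
    (fun m hm => ?_) (fun m hm => ?_) (fun m hm => ?_) fun m hm n hn hmn =>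
      mul_sub_le_rpow_second_difference hc1.le hc2 (by linarith) (hmem hm).1
        (by exact_mod_cast hmn) (hmem hn).2.1
  · refine hcount.trans_eq ?_
    rw [show c - 1 = c - 2 + 1 by ring, Real.rpow_add_one hN'.ne']
    field_simp
    ring
  all_goals
    obtain ⟨hm0, hmN, hdvd⟩ := hmem hm
    have hstep := rpow_add_one_le hc1.le hm0.le ha'
  · have hlt : ⌊(m : ℝ) ^ c⌋₊ < ⌊((m : ℝ) + a) ^ c⌋₊ := by
      rw [← Nat.add_one_le_iff, ← Nat.floor_add_one (by positivity)]
      exact Nat.floor_mono hstep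
    exact Nat.div_pos (Nat.le_of_dvd (Nat.sub_pos_of_lt hlt) hdvd) hK
  · rw [← Nat.cast_mul, Nat.div_mul_cancel hdvd]
    exact abs_floor_sub_floor_sub_le (by positivity) (by linarith)
  · have h1 : 1 ≤ a * (N : ℝ) ^ (c - 1) :=
      one_le_mul_of_one_le_of_one_le ha' (Real.one_le_rpow (by linarith) hc'.le)
    have h2 := rpow_add_sub_rpow_le hc1.le hm0 (a := a) (by linarith)
    have h3 : c * a * ((m : ℝ) + a) ^ (c - 1) ≤ 2 * a * N ^ (c - 1) := by gcongr
    linarith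

lemma card_floorPowMultiples_le_div {c u : ℝ} (hc1 : 1 < c) (hc2 : c ≤ 2) {K N : ℕ} (hK : 0 < K)
    (hu0 : 0 < u) (huN : u ≤ N) (huK : u ^ 2 ≤ K) (hu : u ^ 3 * N ^ (c - 1) ≤ N * K) :
    (#(floorPowMultiples c K N) : ℝ) ≤ (5 + 6 / (c - 1)) * (N / u) := by
  have hN' : (0 : ℝ) < N := hu0.trans_le huN
  have hK' : (0 : ℝ) < K := by exact_mod_cast hK
  have : 0 < c - 1 := sub_pos.2 hc1
  have hA0 : 0 < ⌈u⌉₊ := Nat.ceil_pos.2 hu0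
  have hAu : ((⌈u⌉₊ - 1 : ℕ) : ℝ) ≤ u := by
    rw [Nat.cast_pred hA0]
    linarith [Nat.ceil_lt_add_one hu0.le]
  have hgaps : (#(floorPowMultiples c K N) : ℝ) ≤ (N / ⌈u⌉₊ : ℕ) + 1 + ∑ a ∈ Ico 1 ⌈u⌉₊,
      (#{m ∈ floorPowMultiples c K N | m + a ∈ floorPowMultiples c K N} : ℝ) := by
    exact_mod_cast card_le_div_add_sum_card_pairs
      (fun m hm => mem_range.2 (mem_floorPowMultiples.1 hm).1.2) hA0
  have hpairs : ∑ a ∈ Ico 1 ⌈u⌉₊,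
      (#{m ∈ floorPowMultiples c K N | m + a ∈ floorPowMultiples c K N} : ℝ)
      ≤ u * (6 / (c - 1) * (N / K) + 3 * u * (N ^ (c - 1) / K)) := by
    refine (sum_le_card_nsmul _ _ (6 / (c - 1) * (N / K) + 3 * u * (N ^ (c - 1) / K))
      fun a ha => ?_).trans ?_
    · obtain ⟨ha1, haA⟩ := mem_Ico.1 ha
      refine (card_pairs_floorPowMultiples_le hc1 hc2 hK (by exact_mod_cast hN') ha1).trans ?_
      gcongr
      exact (Nat.lt_ceil.1 haA).le
    · rw [Nat.card_Ico, nsmul_eq_mul]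
      gcongr
  have hisolated : ((N / ⌈u⌉₊ : ℕ) : ℝ) ≤ N / u :=
    Nat.cast_div_le.trans (by gcongr; exact Nat.le_ceil u)
  have hone : 1 ≤ N / u := (one_le_div hu0).2 huN
  have hsquare : u * (N / K) ≤ N / u := by
    rw [← mul_div_assoc, div_le_div_iff₀ hK' hu0]
    nlinarith
  have hcube : u * (u * (N ^ (c - 1) / K)) ≤ N / u := by
    rw [← mul_div_assoc, ← mul_div_assoc, div_le_div_iff₀ hK' hu0]
    linarith
  calc (#(floorPowMultiples c K N) : ℝ)
      ≤ N / u + N / u + u * (6 / (c - 1) * (N / K) + 3 * u * (N ^ (c - 1) / K)) := by linarith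
    _ = 2 * (N / u) + 6 / (c - 1) * (u * (N / K)) + 3 * (u * (u * (N ^ (c - 1) / K))) := by ring
    _ ≤ 2 * (N / u) + 6 / (c - 1) * (N / u) + 3 * (N / u) := by gcongr
    _ = (5 + 6 / (c - 1)) * (N / u) := by ring

lemma le_floor_rpow_of_mem_floorPowMultiples {c : ℝ} (hc : 0 ≤ c) {K N m : ℕ}
    (hm : m ∈ floorPowMultiples c K N) : K ≤ ⌊(m : ℝ) ^ c⌋₊ := by
  obtain ⟨⟨hm1, -⟩, hdvd⟩ := mem_floorPowMultiples.1 hm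
  exact Nat.le_of_dvd (Nat.floor_pos.2 (Real.one_le_rpow (by exact_mod_cast hm1) hc)) hdvd

-- The exponent `(4 - c) / 6` is the largest for which `u = K ^ ((4 - c) / 6)` satisfies
-- `u ^ 3 * N ^ (c - 1) ≤ N * K` whenever `K ≤ N ^ 2`.
theorem card_floorPowMultiples_le {c : ℝ} (hc1 : 1 < c) (hc2 : c ≤ 2) {K : ℕ} (hK : 0 < K)
    (N : ℕ) :
    (#(floorPowMultiples c K N) : ℝ) ≤ (5 + 6 / (c - 1)) * (K : ℝ) ^ (-((4 - c) / 6)) * N := by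
  have hK' : (1 : ℝ) ≤ K := by exact_mod_cast hK
  have : 0 < c - 1 := sub_pos.2 hc1
  rcases (floorPowMultiples c K N).eq_empty_or_nonempty with hempty | ⟨m, hm⟩
  · rw [hempty, card_empty, Nat.cast_zero]
    positivity
  have hmN : (m : ℝ) ≤ N := by exact_mod_cast (mem_floorPowMultiples.1 hm).1.2.le
  have hm1 : (1 : ℝ) ≤ m := by exact_mod_cast (mem_floorPowMultiples.1 hm).1.1
  have hN0 : (0 : ℝ) < N := by linarith
  have hKN : (K : ℝ) ≤ N ^ (2 : ℝ) := by
    calc (K : ℝ) ≤ ⌊(m : ℝ) ^ c⌋₊ := by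
          exact_mod_cast le_floor_rpow_of_mem_floorPowMultiples (by linarith) hm
      _ ≤ (m : ℝ) ^ c := Nat.floor_le (by positivity)
      _ ≤ (m : ℝ) ^ (2 : ℝ) := Real.rpow_le_rpow_of_exponent_le hm1 hc2
      _ ≤ N ^ (2 : ℝ) := by gcongr
  refine (card_floorPowMultiples_le_div hc1 hc2 (u := (K : ℝ) ^ ((4 - c) / 6)) hK
    (by positivity) ?_ ?_ ?_).trans_eq ?_
  · calc (K : ℝ) ^ ((4 - c) / 6) ≤ K ^ ((1 : ℝ) / 2) :=
          Real.rpow_le_rpow_of_exponent_le hK' (by linarith)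
      _ ≤ (N ^ (2 : ℝ)) ^ ((1 : ℝ) / 2) := by gcongr
      _ = N := by rw [← Real.rpow_mul hN0.le]; norm_num
  · rw [← Real.rpow_mul_natCast (by positivity)]
    exact (Real.rpow_le_rpow_of_exponent_le hK' (by push_cast; linarith)).trans_eq (Real.rpow_one _)
  · calc ((K : ℝ) ^ ((4 - c) / 6)) ^ 3 * N ^ (c - 1)
        = K ^ ((2 - c) / 2) * K * N ^ (c - 1) := by
          rw [← Real.rpow_mul_natCast (by positivity), ← Real.rpow_add_one (by positivity)]
          congr 2; push_cast; ring
      _ ≤ (N ^ (2 : ℝ)) ^ ((2 - c) / 2) * K * N ^ (c - 1) := by gcongr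
      _ = N ^ (2 * ((2 - c) / 2) + (c - 1)) * K := by
          rw [Real.rpow_add hN0, ← Real.rpow_mul hN0.le]; ring
      _ = N * K := by rw [show 2 * ((2 - c) / 2) + (c - 1) = 1 by ring, Real.rpow_one]
  · rw [Real.rpow_neg (by positivity)]
    ring

end LargeModuli

section Density

-- Telescoping against `1 / (j + 2) ^ 3 ≤ 1 / (2 (j + 1) (j + 2)) - 1 / (2 (j + 2) (j + 3))`.
lemma sum_one_div_add_two_pow_three_le (n : ℕ) :
    ∑ j ∈ range n, 1 / ((j : ℝ) + 2) ^ 3 ≤ 1 / 4 - 1 / (2 * ((n : ℝ) + 1) * (n + 2)) := by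
  induction n with
  | zero => norm_num
  | succ n ih =>
    have hterm : 1 / ((n : ℝ) + 2) ^ 3
        ≤ 1 / (2 * ((n : ℝ) + 1) * (n + 2)) - 1 / (2 * (n + 1 + 1) * (n + 1 + 2)) := by
      rw [div_sub_div _ _ (by positivity) (by positivity),
        div_le_div_iff₀ (by positivity) (by positivity), ← sub_nonneg]
      ring_nf
      positivity
    rw [sum_range_succ, Nat.cast_add_one]
    linarith

lemma summable_add_two_pow_three_rpow_neg {r : ℝ} (hr : 1 / 3 < r) :
    Summable (fun j : ℕ => (((j + 2) ^ 3 : ℕ) : ℝ) ^ (-r)) := by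
  refine ((summable_nat_add_iff 2).2 (Real.summable_nat_rpow.2 (by linarith : -(3 * r) < -1))).congr
    fun j => ?_
  push_cast
  rw [← Real.rpow_natCast_mul (by positivity)]
  congr 1
  push_cast
  ring

-- Dominated convergence for the densities `a j N / N`, uniformly in the truncation `M`.
lemma eventually_sum_le_of_dominated {a : ℕ → ℕ → ℝ} {α β : ℕ → ℝ} {L ε : ℝ}
    (ha : ∀ j N, 0 ≤ a j N) (hβ : Summable β) (hdom : ∀ j N, a j N ≤ β j * N)
    (hα : ∀ j, ∀ δ > 0, ∀ᶠ N : ℕ in atTop, a j N ≤ (α j + δ) * N)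
    (hL : ∀ n, ∑ j ∈ range n, α j ≤ L) (hε : 0 < ε) :
    ∀ᶠ N : ℕ in atTop, ∀ M, ∑ j ∈ range M, a j N ≤ (L + ε) * N := by
  have hβ0 (j : ℕ) : 0 ≤ β j := by simpa using (ha j 1).trans (hdom j 1)
  obtain ⟨D, hD⟩ : ∃ D, ∑' j, β (j + D) < ε / 2 :=
    ((tendsto_sum_nat_add β).eventually_lt_const (half_pos hε)).exists
  have hhead : ∀ᶠ N : ℕ in atTop, ∀ j ∈ range D, a j N ≤ (α j + ε / (2 * (D + 1))) * N :=
    (eventually_all_finset _).2 fun j _ => hα j _ (by positivity)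
  filter_upwards [hhead] with N hN M
  have hD' : D * (ε / (2 * (D + 1))) ≤ ε / 2 := by
    rw [← mul_div_assoc, div_le_div_iff₀ (by positivity) two_pos]
    linarith
  calc ∑ j ∈ range M, a j N ≤ ∑ j ∈ range (D + M), a j N :=
        sum_le_sum_of_subset_of_nonneg (range_subset_range.2 (Nat.le_add_left M D))
          fun j _ _ => ha j N
    _ = ∑ j ∈ range D, a j N + ∑ j ∈ range M, a (D + j) N := sum_range_add _ _ _
    _ ≤ ∑ j ∈ range D, (α j + ε / (2 * (D + 1))) * N + ∑ j ∈ range M, β (j + D) * N := by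
        gcongr with j hj j
        · exact hN j hj
        · exact add_comm D j ▸ hdom (D + j) N
    _ = (∑ j ∈ range D, α j + D * (ε / (2 * (D + 1))) + ∑ j ∈ range M, β (j + D)) * N := by
        rw [← sum_mul, ← sum_mul, sum_add_distrib, sum_const, card_range, nsmul_eq_mul,
          add_mul (_ + _), add_mul]
    _ ≤ (L + ε / 2 + ε / 2) * N := by
        gcongr
        · exact hL D
        · exact (((summable_nat_add_iff D).2 hβ).sum_le_tsum _ fun j _ => hβ0 _).trans hD.le
    _ = (L + ε) * N := by rw [add_assoc, add_halves]

open Classical in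
lemma card_not_cubeFree_floor_rpow_le {c : ℝ} (hc : 0 ≤ c) (N : ℕ) :
    #{m ∈ Ico 1 N | ¬ CubeFree ⌊((m : ℕ) : ℝ) ^ c⌋₊}
      ≤ ∑ j ∈ range ⌊(N : ℝ) ^ c⌋₊, #(floorPowMultiples c ((j + 2) ^ 3) N) := by
  refine (card_le_card fun m hm => ?_).trans card_biUnion_le
  obtain ⟨hmN, hm⟩ := mem_filter.1 hm
  simp only [CubeFree, not_forall, not_not] at hm
  obtain ⟨p, hp, hdvd⟩ := hm
  obtain ⟨j, rfl⟩ := Nat.exists_eq_add_of_le' hp.two_le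
  have hmem : m ∈ floorPowMultiples c ((j + 2) ^ 3) N :=
    mem_floorPowMultiples.2 ⟨mem_Ico.1 hmN, hdvd⟩
  refine mem_biUnion.2 ⟨j, mem_range.2 ?_, hmem⟩
  calc j < (j + 2) ^ 3 := (Nat.lt_add_of_pos_right two_pos).trans_le (Nat.le_self_pow (by simp) _)
    _ ≤ ⌊(m : ℝ) ^ c⌋₊ := le_floor_rpow_of_mem_floorPowMultiples hc hmem
    _ ≤ ⌊(N : ℝ) ^ c⌋₊ := by gcongr; exact (mem_Ico.1 hmN).2.le

open Classical in
theorem eventually_card_not_cubeFree_floor_rpow_le {c ε : ℝ} (hc1 : 1 < c) (hc2 : c < 2)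
    (hε : 0 < ε) :
    ∀ᶠ N : ℕ in atTop,
      (#{m ∈ Ico 1 N | ¬ CubeFree ⌊((m : ℕ) : ℝ) ^ c⌋₊} : ℝ) ≤ (π ^ 2 / 16 + ε) * N := by
  have hL (n : ℕ) : ∑ j ∈ range n, π ^ 2 / 4 / (((j + 2) ^ 3 : ℕ) : ℝ) ≤ π ^ 2 / 16 := by
    calc ∑ j ∈ range n, π ^ 2 / 4 / (((j + 2) ^ 3 : ℕ) : ℝ)
        = π ^ 2 / 4 * ∑ j ∈ range n, 1 / ((j : ℝ) + 2) ^ 3 := by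
          simp only [mul_sum, mul_one_div, Nat.cast_pow, Nat.cast_add, Nat.cast_ofNat]
      _ ≤ π ^ 2 / 4 * (1 / 4) := by
          gcongr
          exact (sum_one_div_add_two_pow_three_le n).trans (sub_le_self _ (by positivity))
      _ = π ^ 2 / 16 := by ring
  filter_upwards [eventually_sum_le_of_dominated (fun j N => Nat.cast_nonneg _)
    ((summable_add_two_pow_three_rpow_neg (by linarith : 1 / 3 < (4 - c) / 6)).mul_left _)
    (fun j N => card_floorPowMultiples_le hc1 hc2.le (by positivity) N)
    (fun j δ hδ => eventually_card_floorPowMultiples_le hc1 hc2 (by positivity) hδ) hL hε]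
    with N hN
  refine le_trans ?_ (hN ⌊(N : ℝ) ^ c⌋₊)
  exact_mod_cast card_not_cubeFree_floor_rpow_le (by linarith) N

lemma infinite_of_eventually_card_not_le {P : ℕ → Prop} [DecidablePred P] {δ : ℝ} (hδ : δ < 1)
    (h : ∀ᶠ N : ℕ in atTop, (#{m ∈ Ico 1 N | ¬ P m} : ℝ) ≤ δ * N) : {m | P m}.Infinite := by
  intro hfin
  obtain ⟨N, hN, hlarge⟩ := (h.and ((tendsto_natCast_atTop_atTop.const_mul_atTop
    (sub_pos.2 hδ)).eventually_gt_atTop ((#hfin.toFinset : ℝ) + 1))).exists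
  have hP : #{m ∈ Ico 1 N | P m} ≤ #hfin.toFinset :=
    card_le_card fun m hm => hfin.mem_toFinset.2 (mem_filter.1 hm).2
  have hsplit : N ≤ #{m ∈ Ico 1 N | P m} + #{m ∈ Ico 1 N | ¬ P m} + 1 := by
    rw [card_filter_add_card_filter_not, Nat.card_Ico]
    omega
  have : (N : ℝ) ≤ #hfin.toFinset + #{m ∈ Ico 1 N | ¬ P m} + 1 := by
    exact_mod_cast hsplit.trans (by gcongr)
  linarith

end Density

theorem infinitely_many_cubefree_floor_general (c : ℝ) (hc1 : 1 < c) (hc2 : c < 2) :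
    {m : ℕ | CubeFree ⌊(m : ℝ) ^ c⌋₊}.Infinite := by
  classical
  have hδ : π ^ 2 / 16 + 1 / 4 < 1 := by nlinarith [Real.pi_pos, Real.pi_lt_d2]
  exact infinite_of_eventually_card_not_le hδ
    (eventually_card_not_cubeFree_floor_rpow_le hc1 hc2 (by norm_num))

end

theorem infinitely_many_cubefree_floor (c : ℝ) (hc1 : 1 < c) (hc2 : c < 11 / 6) :
    {m : ℕ | CubeFree ⌊(m : ℝ) ^ c⌋₊}.Infinite :=
  infinitely_many_cubefree_floor_general c hc1 (hc2.trans (by norm_num))
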